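/- arXiv:1501.03363 — 2 statements merged into one kernel-verified Lean document; each statement's English description precedes it below -/
import Mathlib

section
/- Let p, q > 0 be real numbers and set ξ = p + q. Assume the rational-parameter setup and additionally that ∑_{m=1}^{M⁺} M_m + ∑_{n=1}^{N⁻} N_n = 2 + ∑_{k=1}^{m⁺} m_k + ∑_{k=1}^{n⁻} n_k. Let H_{mi} ∈ ℂ (1 ≤ m ≤ M⁺, 1 ≤ i ≤ M_m) and G_{ni} ∈ ℂ (1 ≤ n ≤ N⁻, 1 ≤ i ≤ N_n), and define f₁(x) = ∑_{m=1}^{M⁺} ∑_{i=1}^{M_m} H_{mi}·(−1)^i/(x−β_m)^i + ∑_{n=1}^{N⁻} ∑_{i=1}^{N_n} G_{ni}/(x+γ_n)^i + (p/ξ)/x for x ∈ ℂ ∖ ({0} ∪ {β₁,…,β_{M⁺}} ∪ {−γ₁,…,−γ_{N⁻}}). Suppose that: (i) for every 1 ≤ k ≤ m⁺ and every 0 ≤ j ≤ m_k − 1, iteratedDeriv j f₁ (η_k) = 0; (ii) for every 1 ≤ k ≤ n⁻ and every 0 ≤ j ≤ n_k − 1, iteratedDeriv j f₁ (−ϑ_k)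 = 0; (iii) ∑_{n=1}^{N⁻} G_{n1} + p/ξ = ∑_{m=1}^{M⁺} H_{m1}; (iv) −∑_{n=1}^{N⁻} G_{n1}·γ_n + ∑_{n : N_n ≥ 2} G_{n2} = ∑_{m=1}^{M⁺} H_{m1}·β_m − ∑_{m : M_m ≥ 2} H_{m2}. Then f₁(x) = f(x) for every x ∈ ℂ ∖ ({0} ∪ {β₁,…,β_{M⁺}} ∪ {−γ₁,…,−γ_{N⁻}}), where f is the rational function of formula (3.4). -/
open Finset Complex

open Polynomial in
lemma aux_dvd (P Q : ℂ[X]) (F : ℂ → ℂ) (b : ℂ) (B : ℕ)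
    (hF : ContDiffAt ℂ ⊤ F b)
    (hPQ : ∀ᶠ x in nhds b, P.eval x = Q.eval x * F x)
    (hv : ∀ j < B, iteratedDeriv j F b = 0) : (X - C b) ^ B ∣ P := by
  have hPd : ∀ (j : ℕ) (R : ℂ[X]), iteratedDeriv j (fun x => R.eval x)
      = fun x => (derivative^[j] R).eval x := by
    intro j
    induction j with
    | zero => intro R; simp
    | succ j ih =>
      intro R
      rw [iteratedDeriv_succ', Function.iterate_succ_apply, ← ih]
      congr 1
      funext x
      exact R.deriv
  by_cases hP : P = 0
  · simp [hP]
  rcases B with _ | B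
  · simp
  rw [← le_rootMultiplicity_iff hP, Nat.succ_le_iff, lt_rootMultiplicity_iff_isRoot_iterate_derivative hP]
  intro j hj
  have h1 := Filter.EventuallyEq.iteratedDeriv_eq j
    (f := fun x => P.eval x) (g := fun x => Q.eval x * F x) (x := b) hPQ
  rw [hPd] at h1
  rw [IsRoot.def]
  refine h1.trans ?_
  rw [iteratedDeriv_fun_mul (by simpa using (Q.contDiff_aeval (𝕜 := ℂ) _).contDiffAt) (hF.of_le le_top)]
  refine Finset.sum_eq_zero fun i _ => ?_
  rw [hv (j - i) (by omega), mul_zero]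

open Polynomial in
lemma aux_core {ι κ : Type*} [Fintype ι] [Fintype κ] (a : ι → ℂ) (A : ι → ℕ) (b : κ → ℂ) (B : κ → ℕ)
    (c : ℂ) (K : ι → ℕ → ℂ) (F : ℂ → ℂ)
    (hA : ∀ i, 1 ≤ A i) (hb : ∀ k, b k ≠ 0) (hbinj : Function.Injective b)
    (hab : ∀ k i, b k ≠ a i) (hdeg : ∑ i, A i = 2 + ∑ k, B k)
    (hF : ∀ x, F x = ∑ i, ∑ j ∈ Finset.Icc 1 (A i), K i j / (x - a i) ^ j + c / x)
    (hv : ∀ k, ∀ j < B k, iteratedDeriv j F (b k) = 0)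
    (h1 : ∑ i, K i 1 + c = 0)
    (h2 : ∑ i, (K i 1 * a i + if 2 ≤ A i then K i 2 else 0) = 0)
    (x : ℂ) (hx0 : x ≠ 0) (hxa : ∀ i, x ≠ a i) :
    F x = c * ((∏ i, (-a i) ^ A i) * ∏ k, (x - b k) ^ B k) /
      ((∏ k, (-b k) ^ B k) * x * ∏ i, (x - a i) ^ A i) := by
  classical
  set D : ℂ[X] := ∏ i, (X - C (a i)) ^ A i with hD
  set Z : ℂ[X] := ∏ k, (X - C (b k)) ^ B k with hZ
  let T : ι → ℕ → ℂ[X] := fun i j =>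
    X * (∏ k ∈ univ.erase i, (X - C (a k)) ^ A k) * (X - C (a i)) ^ (A i - j)
  let P : ℂ[X] := ∑ i, ∑ j ∈ Finset.Icc 1 (A i), C (K i j) * T i j + C c * D
  have hDm : D.Monic := monic_prod_of_monic _ _ fun i _ => (monic_X_sub_C _).pow _
  have hZm : Z.Monic := monic_prod_of_monic _ _ fun i _ => (monic_X_sub_C _).pow _
  have hDd : D.natDegree = ∑ i, A i := by
    rw [hD, natDegree_prod_of_monic _ _ fun i _ => (monic_X_sub_C _).pow _]; simp
  have hZd : Z.natDegree = ∑ k, B k := by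
    rw [hZ, natDegree_prod_of_monic _ _ fun i _ => (monic_X_sub_C _).pow _]; simp
  have hT : ∀ i, ∀ j ≤ A i, T i j * (X - C (a i)) ^ j = X * D := by
    intro i j hj
    rw [hD, ← Finset.mul_prod_erase _ _ (Finset.mem_univ i)]
    simp only [T]
    rw [mul_assoc, ← pow_add, Nat.sub_add_cancel hj]; ring
  have hTm : ∀ i j, (T i j).Monic := fun i j =>
    (monic_X.mul (monic_prod_of_monic _ _ fun i _ => (monic_X_sub_C _).pow _)).mul
      ((monic_X_sub_C _).pow _)
  have hTd : ∀ i, ∀ j ≤ A i, (T i j).natDegree + j = D.natDegree + 1 := by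
    intro i j hj
    have := congrArg natDegree (hT i j hj)
    rw [(hTm i j).natDegree_mul ((monic_X_sub_C _).pow _), monic_X.natDegree_mul hDm] at this
    simp at this
    omega
  -- evaluation
  have hPF : ∀ y, y ≠ 0 → (∀ i, y ≠ a i) → P.eval y = (X * D).eval y * F y := by
    intro y hy hya
    rw [hF, mul_add, Finset.mul_sum]
    simp only [P, eval_add, eval_finsetSum]
    congr 1
    · refine Finset.sum_congr rfl fun i _ => ?_
      rw [Finset.mul_sum]
      refine Finset.sum_congr rfl fun j hj => ?_
      rw [← hT i j (Finset.mem_Icc.1 hj).2]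
      have := sub_ne_zero.2 (hya i)
      simp only [eval_mul, eval_pow, eval_sub, eval_X, eval_C]
      field_simp
    · simp only [eval_mul, eval_X, eval_C]
      field_simp
  -- divisibility
  have hZP : Z ∣ P := by
    refine Finset.prod_dvd_of_coprime (fun i _ j _ hij => ?_) fun k _ => ?_
    · exact IsCoprime.pow (pairwise_coprime_X_sub_C hbinj hij)
    · refine aux_dvd P (X * D) F (b k) (B k) ?_ ?_ (hv k)
      · rw [show F = _ from funext hF]
        refine ContDiffAt.add (ContDiffAt.sum fun i _ => ContDiffAt.sum fun j _ => ?_) ?_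
        · exact contDiffAt_const.div ((contDiffAt_id.sub contDiffAt_const).pow _)
            (pow_ne_zero _ (sub_ne_zero.2 (hab k i)))
        · exact contDiffAt_const.div contDiffAt_id (hb k)
      · have e1 : ∀ᶠ y in nhds (b k), y ≠ 0 := eventually_ne_nhds (hb k)
        have e2 : ∀ᶠ y in nhds (b k), ∀ i, y ≠ a i :=
          Filter.eventually_all.2 fun i => eventually_ne_nhds (hab k i)
        filter_upwards [e1, e2] with y h3 h4 using hPF y h3 h4
  -- degree
  have hXP : (X ^ 2 * P).natDegree ≤ D.natDegree := by
    have key : X ^ 2 * P = ∑ i, ∑ j ∈ Finset.Icc 1 (A i), (C (K i j) * X ^ 2 * T i j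
        - (if j = 1 then C (K i 1) * (X + C (a i)) * (X * D) else 0)
        - (if j = 2 then C (K i 2) * (X * D) else 0)) := by
      have e : ∑ i, ∑ j ∈ Finset.Icc 1 (A i), (C (K i j) * X ^ 2 * T i j
        - (if j = 1 then C (K i 1) * (X + C (a i)) * (X * D) else 0)
        - (if j = 2 then C (K i 2) * (X * D) else 0)) =
        X ^ 2 * P - C (∑ i, K i 1 + c) * X * (X * D)
          - C (∑ i, (K i 1 * a i + if 2 ≤ A i then K i 2 else 0)) * (X * D) := by
        simp only [Finset.sum_sub_distrib, Finset.sum_ite_eq', Finset.mem_Icc, P, hA, le_refl,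
          true_and, if_true, one_le_two, Finset.sum_add_distrib, map_add, map_sum, add_mul,
          Finset.sum_mul, mul_add, Finset.mul_sum, C_mul, apply_ite C, C_0, ite_mul, zero_mul]
        have : ∀ i j, C (K i j) * X ^ 2 * T i j = X ^ 2 * (C (K i j) * T i j) := fun i j => by ring
        simp only [this]
        ring
      rw [e, h1, h2]; simp
    rw [key]
    refine natDegree_sum_le_of_forall_le _ _ fun i _ => natDegree_sum_le_of_forall_le _ _ fun j hj => ?_
    obtain ⟨hj1, hj2⟩ := Finset.mem_Icc.1 hj
    have hd := hTd i j hj2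
    have hq := hT i j hj2
    by_cases hj1' : j = 1
    · subst hj1'
      have : C (K i 1) * X ^ 2 * T i 1 - C (K i 1) * (X + C (a i)) * (X * D)
          = C (K i 1 * a i ^ 2) * T i 1 := by
        rw [← hq]; simp only [C_mul, C_pow]; ring
      simp only [if_true, show (1:ℕ) ≠ 2 by norm_num, if_false, sub_zero]
      rw [this]
      exact (natDegree_C_mul_le _ _).trans (by omega)
    by_cases hj2' : j = 2
    · subst hj2'
      have : C (K i 2) * X ^ 2 * T i 2 - C (K i 2) * (X * D)
          = (C (K i 2 * 2 * a i) * X + C (- K i 2 * a i ^ 2)) * T i 2 := by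
        rw [← hq]; simp only [C_mul, C_pow, C_neg, map_ofNat]; ring
      simp only [if_true, show (2:ℕ) ≠ 1 by norm_num, if_false, sub_zero]
      rw [this]
      refine natDegree_mul_le.trans ?_
      have := natDegree_linear_le (a := K i 2 * 2 * a i) (b := - K i 2 * a i ^ 2)
      omega
    · simp only [hj1', hj2', if_false, sub_zero]
      rw [mul_assoc]
      refine (natDegree_C_mul_le _ _).trans (natDegree_mul_le.trans ?_)
      rw [natDegree_X_pow]
      omega
  obtain ⟨R, hR⟩ := hZP
  have hR0 : R.natDegree = 0 := by
    by_cases hR00 : R = 0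
    · simp [hR00]
    have hm : (X ^ 2 * Z : ℂ[X]).Monic := (monic_X_pow 2).mul hZm
    rw [hR, ← mul_assoc, hm.natDegree_mul' hR00, (monic_X_pow 2).natDegree_mul hZm,
      natDegree_X_pow, hZd, hDd] at hXP
    omega
  obtain ⟨r, rfl⟩ := natDegree_eq_zero.1 hR0
  have hP0 : P.eval 0 = c * D.eval 0 := by
    simp [P, T, eval_finsetSum]
  have hD0 : D.eval 0 = ∏ i, (-a i) ^ A i := by simp [hD, eval_prod]
  have hZ0 : Z.eval 0 = ∏ k, (-b k) ^ B k := by simp [hZ, eval_prod]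
  have hDx : D.eval x = ∏ i, (x - a i) ^ A i := by simp [hD, eval_prod]
  have hZx : Z.eval x = ∏ k, (x - b k) ^ B k := by simp [hZ, eval_prod]
  have hZ0' : Z.eval 0 ≠ 0 := by
    rw [hZ0]; exact Finset.prod_ne_zero_iff.2 fun k _ => pow_ne_zero _ (neg_ne_zero.2 (hb k))
  have hDx' : D.eval x ≠ 0 := by
    rw [hDx]; exact Finset.prod_ne_zero_iff.2 fun k _ => pow_ne_zero _ (sub_ne_zero.2 (hxa k))
  have hx := hPF x hx0 hxa
  rw [← hD0, ← hZ0, ← hDx, ← hZx, eq_div_iff (mul_ne_zero (mul_ne_zero hZ0' hx0) hDx')]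
  rw [hR] at hx hP0
  simp only [eval_mul, eval_C, eval_X] at hx hP0
  linear_combination (-Z.eval 0) * hx + Z.eval x * hP0

/-- Step 3 of the proof of Theorem 3.1: any partial-fraction function `f₁` (formula (3.20))
satisfying the vanishing conditions (3.15), (3.18) at the `η_k` and `−ϑ_k` and the matching
conditions (3.10), (3.11) must equal the explicit rational function `f` of formula (3.4). -/
theorem paper_thm_3_1_step3 (p q : ℝ) (hp : 0 < p) (hq : 0 < q)
    (Mp Nm mp nm : ℕ)
    (β : Fin Mp → ℂ) (M : Fin Mp → ℕ)
    (γ : Fin Nm → ℂ) (N : Fin Nm → ℕ)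
    (η : Fin mp → ℂ) (m : Fin mp → ℕ)
    (ϑ : Fin nm → ℂ) (n : Fin nm → ℕ)
    (hβinj : Function.Injective β) (hβre : ∀ k, 0 < (β k).re) (hM : ∀ k, 1 ≤ M k)
    (hγinj : Function.Injective γ) (hγre : ∀ k, 0 < (γ k).re) (hN : ∀ k, 1 ≤ N k)
    (hηinj : Function.Injective η) (hηre : ∀ k, 0 < (η k).re) (hm : ∀ k, 1 ≤ m k)
    (hϑinj : Function.Injective ϑ) (hϑre : ∀ k, 0 < (ϑ k).re) (hn : ∀ k, 1 ≤ n k)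
    (hηβ : ∀ k j, η k ≠ β j) (hϑγ : ∀ k j, ϑ k ≠ γ j)
    (hdeg : ∑ k, M k + ∑ k, N k = 2 + ∑ k, m k + ∑ k, n k)
    (H : Fin Mp → ℕ → ℂ) (G : Fin Nm → ℕ → ℂ) (f₁ f : ℂ → ℂ)
    (hf₁ : ∀ x : ℂ, f₁ x =
      ∑ mm, ∑ i ∈ Finset.Icc 1 (M mm), H mm i * (-1) ^ i / (x - β mm) ^ i
        + ∑ nn, ∑ i ∈ Finset.Icc 1 (N nn), G nn i / (x + γ nn) ^ i
        + ((p : ℂ) / ((p : ℂ) + (q : ℂ))) / x)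
    (hf : ∀ x : ℂ, f x =
      ((p : ℂ) / ((p : ℂ) + (q : ℂ))) *
        ((∏ mm, (-β mm) ^ M mm) * (∏ nn, γ nn ^ N nn) *
          (∏ k, (x - η k) ^ m k) * ∏ k, (x + ϑ k) ^ n k) /
        ((∏ k, (-η k) ^ m k) * (∏ k, ϑ k ^ n k) * x *
          (∏ mm, (x - β mm) ^ M mm) * ∏ nn, (x + γ nn) ^ N nn))
    (hvanη : ∀ k : Fin mp, ∀ j < m k, iteratedDeriv j f₁ (η k) = 0)
    (hvanϑ : ∀ k : Fin nm, ∀ j < n k, iteratedDeriv j f₁ (-ϑ k) = 0)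
    (hmatch1 : ∑ nn, G nn 1 + (p : ℂ) / ((p : ℂ) + (q : ℂ)) = ∑ mm, H mm 1)
    (hmatch2 : -∑ nn, G nn 1 * γ nn
        + ∑ nn ∈ Finset.univ.filter (fun nn => 2 ≤ N nn), G nn 2
      = ∑ mm, H mm 1 * β mm
        - ∑ mm ∈ Finset.univ.filter (fun mm => 2 ≤ M mm), H mm 2) :
    ∀ x : ℂ, x ≠ 0 → (∀ mm, x ≠ β mm) → (∀ nn, x ≠ -γ nn) → f₁ x = f x := by
  intro x hx0 hxβ hxγ
  have hre : ∀ {z : ℂ}, 0 < z.re → z ≠ 0 := by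
    rintro z hz rfl
    simp at hz
  have hne : ∀ {z w : ℂ}, 0 < z.re → 0 < w.re → z ≠ -w := by
    rintro z w hz hw rfl
    simp at hz
    linarith
  have := aux_core (Sum.elim β fun k => -γ k) (Sum.elim M N) (Sum.elim η fun k => -ϑ k)
    (Sum.elim m n) ((p : ℂ) / ((p : ℂ) + (q : ℂ))) (Sum.elim (fun k i => H k i * (-1) ^ i) G) f₁
    (by rintro (k | k); exacts [hM k, hN k])
    (by rintro (k | k); exacts [hre (hηre k), neg_ne_zero.2 (hre (hϑre k))])
    (by
      refine Function.Injective.sumElim hηinj (neg_injective.comp hϑinj) fun i j => ?_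
      exact hne (hηre i) (hϑre j))
    (by
      rintro (k | k) (j | j)
      · exact hηβ k j
      · exact hne (hηre k) (hγre j)
      · exact (hne (hβre j) (hϑre k)).symm
      · simpa using hϑγ k j)
    (by simp only [Fintype.sum_sum_type, Sum.elim_inl, Sum.elim_inr]; omega)
    (by intro y; rw [hf₁]; simp [Fintype.sum_sum_type])
    (by rintro (k | k); exacts [hvanη k, hvanϑ k])
    (by
      simp only [Fintype.sum_sum_type, Sum.elim_inl, Sum.elim_inr, pow_one, mul_neg, mul_one,
        Finset.sum_neg_distrib]
      linear_combination hmatch1)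
    (by
      simp only [Finset.sum_filter] at hmatch2
      rw [Fintype.sum_sum_type]
      show ∑ k, (H k 1 * (-1) ^ 1 * β k + if 2 ≤ M k then H k 2 * (-1) ^ 2 else 0)
        + ∑ k, (G k 1 * -γ k + if 2 ≤ N k then G k 2 else 0) = 0
      simp only [pow_one, mul_neg, mul_one, neg_mul, even_two, Even.neg_pow, one_pow, Finset.sum_add_distrib, Finset.sum_neg_distrib]
      linear_combination hmatch2)
    x hx0 (by rintro (k | k); exacts [hxβ k, hxγ k])
  rw [this, hf]
  simp only [Fintype.prod_sum_type, Sum.elim_inl, Sum.elim_inr, sub_neg_eq_add, neg_neg]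
  simp only [mul_assoc]
end

section
/- Let β₁,…,β_{M⁺} be pairwise distinct complex numbers with positive real parts, with multiplicities M₁,…,M_{M⁺} ≥ 1, and let γ₁,…,γ_{N⁻} be pairwise distinct complex numbers with positive real parts, with multiplicities N₁,…,N_{N⁻} ≥ 1. Let H_{mi} ∈ ℂ (1 ≤ m ≤ M⁺, 1 ≤ i ≤ M_m), G_{ni} ∈ ℂ (1 ≤ n ≤ N⁻, 1 ≤ i ≤ N_n), c ∈ ℂ, and b ∈ ℝ. Define W : ℝ → ℂ by W(x) = 1 − c + ∑_{m=1}^{M⁺} ∑_{i=1}^{M_m} H_{mi}·((b−x)^{i−1}/(i−1)!)·e^{β_m(x−b)} for x < b, and W(x) = 1 + ∑_{n=1}^{N⁻} ∑_{i=1}^{N_n} G_{ni}·((x−b)^{i−1}/(i−1)!)·e^{γ_n(b−x)} for x ≥ b. Then for every φ ∈ ℂ with −min_{1≤n≤N⁻} Re(γ_n) < Re(φ) < 0, the function x ↦ e^{−φ(x−b)}·(W(x) − 1) is integrable on ℝ and ∫_{−∞}^{∞} e^{−φ(x−b)}·(W(x) − 1) dx = ∑_{m=1}^{M⁺} ∑_{i=1}^{M_m}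 H_{mi}·(−1)^i/(φ−β_m)^i + ∑_{n=1}^{N⁻} ∑_{i=1}^{N_n} G_{ni}/(φ+γ_n)^i + c/φ. -/
open MeasureTheory Finset Complex

lemma aux_integrable (a : ℂ) (ha : 0 < a.re) (k : ℕ) :
    IntegrableOn (fun t : ℝ => (t : ℂ) ^ k / (Nat.factorial k : ℂ) * Complex.exp (-a * t))
      (Set.Ioi 0) := by
  have h := integrableOn_rpow_mul_exp_neg_mul_rpow (p := 1) (s := (k : ℝ)) (b := a.re)
    (by have : (0 : ℝ) ≤ k := Nat.cast_nonneg k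
        linarith) one_pos ha
  have h' : IntegrableOn (fun t : ℝ => (t : ℂ) ^ k * Complex.exp (-a * t)) (Set.Ioi 0) := by
    refine Integrable.mono h (by fun_prop) ?_
    filter_upwards [ae_restrict_mem measurableSet_Ioi] with t ht
    simp [Complex.norm_exp]
  have := h'.const_mul ((Nat.factorial k : ℂ)⁻¹)
  refine this.congr (Filter.Eventually.of_forall fun t => ?_)
  simp only
  ring

lemma aux_integral (a : ℂ) (ha : 0 < a.re) (k : ℕ) :
    ∫ t in Set.Ioi (0 : ℝ), (t : ℂ) ^ k / (Nat.factorial k : ℂ) * Complex.exp (-a * t)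
      = 1 / a ^ (k + 1) := by
  have ha0 : a ≠ 0 := by rintro rfl; simp at ha
  induction k with
  | zero =>
    have := integral_exp_mul_complex_Ioi (a := -a) (by simpa using ha) 0
    simpa using this
  | succ k ih =>
    have hd : ∀ t : ℝ, HasDerivAt (fun t : ℝ => (t : ℂ) ^ (k + 1) / (Nat.factorial (k + 1) : ℂ)
        * Complex.exp (-a * t))
        ((t : ℂ) ^ k / (Nat.factorial k : ℂ) * Complex.exp (-a * t)
          - a * ((t : ℂ) ^ (k + 1) / (Nat.factorial (k + 1) : ℂ) * Complex.exp (-a * t))) t := by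
      intro t
      have h1 : HasDerivAt (fun z : ℂ => z ^ (k + 1) / (Nat.factorial (k + 1) : ℂ)
        * Complex.exp (-a * z)) _ (t : ℂ) :=
        ((hasDerivAt_pow (k + 1) (t : ℂ)).div_const _).mul
          (((hasDerivAt_id (t : ℂ)).const_mul (-a)).cexp)
      convert h1.comp_ofReal using 1
      have : (Nat.factorial k : ℂ) ≠ 0 := by exact_mod_cast Nat.factorial_ne_zero k
      have h2 : (k : ℂ) + 1 ≠ 0 := by exact_mod_cast Nat.succ_ne_zero k
      simp only [Nat.factorial_succ, id]
      push_cast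
      field_simp
      ring
    have hi := (aux_integrable a ha k).sub ((aux_integrable a ha (k + 1)).const_mul a)
    have hlim := tendsto_zero_of_hasDerivAt_of_integrableOn_Ioi (a := 0)
      (fun t _ => hd t) hi (aux_integrable a ha (k + 1))
    have := integral_Ioi_of_hasDerivAt_of_tendsto' (a := 0) (fun t _ => hd t) hi hlim
    rw [integral_sub (aux_integrable a ha k) ((aux_integrable a ha (k + 1)).const_mul a), ih,
      integral_const_mul] at this
    simp at this
    rw [sub_eq_zero] at this
    rw [pow_succ, eq_div_iff (mul_ne_zero (pow_ne_zero _ ha0) ha0), mul_comm _ a, ← mul_assoc,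
      mul_comm _ a]
    simp only [Nat.factorial_succ] at this ⊢
    push_cast at this ⊢
    simp only [neg_mul]
    rw [← this]
    field_simp

/-- one-sided transform of a finite combination -/
lemma aux_sum {P : ℕ} (a : Fin P → ℂ) (ha : ∀ k, 0 < (a k).re) (M : Fin P → ℕ)
    (H : Fin P → ℕ → ℂ) :
    IntegrableOn (fun t : ℝ => ∑ mm, ∑ i ∈ Finset.Icc 1 (M mm), H mm i *
      ((t : ℂ) ^ (i - 1) / (Nat.factorial (i - 1) : ℂ) * Complex.exp (-a mm * t))) (Set.Ioi 0) ∧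
    ∫ t in Set.Ioi (0 : ℝ), ∑ mm, ∑ i ∈ Finset.Icc 1 (M mm), H mm i *
      ((t : ℂ) ^ (i - 1) / (Nat.factorial (i - 1) : ℂ) * Complex.exp (-a mm * t))
      = ∑ mm, ∑ i ∈ Finset.Icc 1 (M mm), H mm i / (a mm) ^ i := by
  have h1 : ∀ mm i, IntegrableOn (fun t : ℝ => H mm i *
      ((t : ℂ) ^ (i - 1) / (Nat.factorial (i - 1) : ℂ) * Complex.exp (-a mm * t))) (Set.Ioi 0) :=
    fun mm i => (aux_integrable (a mm) (ha mm) (i - 1)).const_mul _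
  have h2 : ∀ mm, IntegrableOn (fun t : ℝ => ∑ i ∈ Finset.Icc 1 (M mm), H mm i *
      ((t : ℂ) ^ (i - 1) / (Nat.factorial (i - 1) : ℂ) * Complex.exp (-a mm * t))) (Set.Ioi 0) :=
    fun mm => integrable_finsetSum _ fun i _ => h1 mm i
  refine ⟨integrable_finsetSum _ fun mm _ => h2 mm, ?_⟩
  rw [integral_finsetSum _ fun mm _ => h2 mm]
  refine Finset.sum_congr rfl fun mm _ => ?_
  rw [integral_finsetSum _ fun i _ => h1 mm i]
  refine Finset.sum_congr rfl fun i hi => ?_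
  rw [integral_const_mul, aux_integral _ (ha mm), Nat.sub_add_cancel (Finset.mem_Icc.1 hi).1]
  ring


/-- Analytic core of the transform identity (3.36) in the proof of Corollary 3.2: the
two-sided Laplace transform of the piecewise function `W` of the form (3.1) (with `c`
playing the role of `p/ξ`) equals the partial-fraction rational function `f₁` of (3.20)
evaluated at `φ`, for `−min_n Re(γ_n) < Re(φ) < 0`. -/
theorem paper_eq_3_36 (Mp Nm : ℕ)
    (β : Fin Mp → ℂ) (M : Fin Mp → ℕ)
    (γ : Fin Nm → ℂ) (N : Fin Nm → ℕ)
    (hβinj : Function.Injective β) (hβre : ∀ k, 0 < (β k).re) (hM : ∀ k, 1 ≤ M k)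
    (hγinj : Function.Injective γ) (hγre : ∀ k, 0 < (γ k).re) (hN : ∀ k, 1 ≤ N k)
    (H : Fin Mp → ℕ → ℂ) (G : Fin Nm → ℕ → ℂ) (c : ℂ) (b : ℝ) (W : ℝ → ℂ)
    (hWlt : ∀ x : ℝ, x < b → W x =
      1 - c + ∑ mm, ∑ i ∈ Finset.Icc 1 (M mm),
        H mm i * (((b - x : ℝ) : ℂ) ^ (i - 1) / (Nat.factorial (i - 1) : ℂ)) *
          Complex.exp (β mm * ((x : ℂ) - (b : ℂ))))
    (hWge : ∀ x : ℝ, b ≤ x → W x =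
      1 + ∑ nn, ∑ i ∈ Finset.Icc 1 (N nn),
        G nn i * (((x - b : ℝ) : ℂ) ^ (i - 1) / (Nat.factorial (i - 1) : ℂ)) *
          Complex.exp (γ nn * ((b : ℂ) - (x : ℂ))))
    (φ : ℂ) (hφ1 : ∀ nn, -(γ nn).re < φ.re) (hφ2 : φ.re < 0) :
    MeasureTheory.Integrable
      (fun x : ℝ => Complex.exp (-φ * ((x : ℂ) - (b : ℂ))) * (W x - 1)) ∧
    ∫ x : ℝ, Complex.exp (-φ * ((x : ℂ) - (b : ℂ))) * (W x - 1)
      = ∑ mm, ∑ i ∈ Finset.Icc 1 (M mm), H mm i * (-1) ^ i / (φ - β mm) ^ i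
        + ∑ nn, ∑ i ∈ Finset.Icc 1 (N nn), G nn i / (φ + γ nn) ^ i
        + c / φ := by
  obtain ⟨iG, eG⟩ := aux_sum (fun n => φ + γ n)
    (fun n => by have := hφ1 n; simp only [Complex.add_re]; linarith) N G
  obtain ⟨iH, eH⟩ := aux_sum (fun m => β m - φ)
    (fun m => by have := hβre m; simp only [Complex.sub_re]; linarith) M H
  have iC : IntegrableOn (fun t : ℝ => -c * Complex.exp (φ * t)) (Set.Ioi 0) :=
    (integrableOn_exp_mul_complex_Ioi hφ2 0).const_mul _
  have eC : ∫ t in Set.Ioi (0 : ℝ), -c * Complex.exp (φ * t) = c / φ := by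
    rw [integral_const_mul, integral_exp_mul_complex_Ioi hφ2 0]
    simp
    ring
  have iHC := iH.add iC
  have eHC := integral_add iH iC
  rw [eH, eC] at eHC
  rw [← integrable_indicator_iff measurableSet_Ioi] at iG iHC
  rw [← integral_indicator measurableSet_Ioi] at eG eHC
  have jG := iG.comp_sub_right b
  have jH := iHC.comp_sub_left b
  rw [← integral_sub_right_eq_self _ b] at eG
  rw [← integral_sub_left_eq_self _ volume b] at eHC
  have key := jH.add jG
  have ekey := integral_add jH jG
  have hae : ∀ᵐ x : ℝ, x ≠ b := by simp [ae_iff]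
  refine (fun hcong => ⟨key.congr hcong, (integral_congr_ae hcong).symm.trans
    (ekey.trans ?_)⟩) ?_
  swap
  · refine (congrArg₂ (· + ·) eHC eG).trans ?_
    have : ∀ m i, H m i / (β m - φ) ^ i = H m i * (-1) ^ i / (φ - β m) ^ i := by
      intro m i
      rw [← neg_sub, neg_pow, mul_comm ((-1 : ℂ) ^ i), ← div_div, div_right_comm]
      congr 1
      rw [div_eq_mul_inv, ← inv_pow]
      norm_num
    simp only [this]
    ring
  · filter_upwards [hae] with x hx
    rcases lt_or_gt_of_ne hx with h | h
    · have h1 : b - x ∈ Set.Ioi (0 : ℝ) := by simpa using h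
      have h2 : x - b ∉ Set.Ioi (0 : ℝ) := by simpa using h.le
      simp only [Pi.add_apply, Set.indicator_of_mem h1, Set.indicator_of_notMem h2]
      rw [hWlt x h]
      have : ∀ z : ℂ, 1 - c + z - 1 = z + -c := fun z => by ring
      rw [this, mul_add, add_zero, Finset.mul_sum]
      congr 1
      · refine Finset.sum_congr rfl fun m _ => ?_
        rw [Finset.mul_sum]
        refine Finset.sum_congr rfl fun i _ => ?_
        have : Complex.exp (-(β m - φ) * ((b - x : ℝ) : ℂ)) =
            Complex.exp (-φ * ((x : ℂ) - b)) * Complex.exp (β m * ((x : ℂ) - b)) := by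
          rw [← Complex.exp_add]; congr 1; push_cast; ring
        rw [this]; ring
      · rw [mul_comm]; congr 2; push_cast; ring
    · have h1 : x - b ∈ Set.Ioi (0 : ℝ) := by simpa using h
      have h2 : b - x ∉ Set.Ioi (0 : ℝ) := by simpa using h.le
      simp only [Pi.add_apply, Set.indicator_of_mem h1, Set.indicator_of_notMem h2]
      rw [hWge x h.le, add_sub_cancel_left, zero_add, Finset.mul_sum]
      refine Finset.sum_congr rfl fun m _ => ?_
      rw [Finset.mul_sum]
      refine Finset.sum_congr rfl fun i _ => ?_
      have : Complex.exp (-(φ + γ m) * ((x - b : ℝ) : ℂ)) =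
          Complex.exp (-φ * ((x : ℂ) - b)) * Complex.exp (γ m * ((b : ℂ) - x)) := by
        rw [← Complex.exp_add]; congr 1; push_cast; ring
      rw [this]; ring
end
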